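/- Let (X,r) be a non-degenerate set-theoretical YBE solution, with r(x,y) = (σ_x(y), γ_y(x)) and r⁻¹(x,y) = (τ_x(y), ρ_y(x)). Define 𝔩, 𝔯 : X → X by 𝔩(a) = σ_a(x_a), where x_a is the unique element with γ_{x_a}(a) = x_a, and 𝔯(a) = ρ_a(y_a), where y_a is the unique element with τ_{y_a}(a) = y_a. Then 𝔯 ∘ 𝔩 = id_X and 𝔩 ∘ 𝔯 = id_X; in particular 𝔩 is a bijection of X. -/

import Mathlib

/-!
Call `(b, c)` a *right pair* with witness `y` if `r (y, b) = (y, c)`; this says `b = 𝔯 c`.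
Dually `r (a, x) = (c, x)` says `c = 𝔩 a`. The braid relation on triples `(t, y, b)` shows that
`γ_b = γ_c` for a right pair (`pair_γ`), and that right pairs are stable under each `σ_v⁻¹`
(`pair_pullback`). The class of non-degenerate solutions is closed under inverting `r` and under
conjugating it by the flip (`inverse`, `mirror`), so the same facts hold for `r⁻¹`, and their
mirror images hold for `𝔩`.

The witness `y` is determined by `b` (`witness_unique`): for the inverse solution `ρ_b = ρ_c`, so
`r (e, b) = (y, b)` where `γ_b e = b`. Hence `e` depends on `b` only, and so does `y = σ_e b`.

Now let `r (y, b) = (y, c)` and write `c = σ_b t`, `b = σ_b t'`. Pulling back along `σ_b` makes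
`(t', t)` a right pair, so `γ_t = γ_t'`; also `(t', γ_t' b)` is a right pair with witness `b`. By
uniqueness of the witness `t = γ_t b`, that is `r (b, t) = (c, t)`: so `c = 𝔩 b` and
`𝔩 ∘ 𝔯 = id`. Since `σ_a = σ_(𝔩 a)`, the map `𝔩` is injective, and `𝔯 ∘ 𝔩 = id` follows.
-/

/-- The map `X × X → X × X` given by `(x, y) ↦ (σ_x(y), γ_y(x))`. -/
def rmap {X : Type*} (σ γ : X → X → X) : X × X → X × X :=
  fun p => (σ p.1 p.2, γ p.2 p.1)

/-- `r × id : X × X × X → X × X × X`, applying `r` to the first two factors. -/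
def lift12 {X : Type*} (r : X × X → X × X) : X × X × X → X × X × X :=
  fun p => ((r (p.1, p.2.1)).1, (r (p.1, p.2.1)).2, p.2.2)

/-- `id × r : X × X × X → X × X × X`, applying `r` to the last two factors. -/
def lift23 {X : Type*} (r : X × X → X × X) : X × X × X → X × X × X :=
  fun p => (p.1, r (p.2.1, p.2.2))

/-- A non-degenerate set-theoretical solution `(X, r)` of the Yang–Baxter equation:
`r (x, y) = (σ_x(y), γ_y(x))` is a bijection with inverse `r⁻¹ (x, y) = (τ_x(y), ρ_y(x))`,
`r` satisfies the braid relation, and all the maps `σ_x, γ_y, τ_x, ρ_y` are bijections. -/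
structure NDYBE (X : Type*) where
  σ : X → X → X
  γ : X → X → X
  τ : X → X → X
  ρ : X → X → X
  braid : lift23 (rmap σ γ) ∘ lift12 (rmap σ γ) ∘ lift23 (rmap σ γ)
        = lift12 (rmap σ γ) ∘ lift23 (rmap σ γ) ∘ lift12 (rmap σ γ)
  inv_left : ∀ p : X × X, rmap τ ρ (rmap σ γ p) = p
  inv_right : ∀ p : X × X, rmap σ γ (rmap τ ρ p) = p
  σ_bij : ∀ x : X, Function.Bijective (σ x)
  γ_bij : ∀ y : X, Function.Bijective (γ y)
  τ_bij : ∀ x : X, Function.Bijective (τ x)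
  ρ_bij : ∀ y : X, Function.Bijective (ρ y)

namespace NDYBE

variable {X : Type*} (S : NDYBE X)

theorem braid_fst (x y z : X) : S.σ x (S.σ y z) = S.σ (S.σ x y) (S.σ (S.γ y x) z) := by
  have h := congrFun S.braid (x, y, z)
  simp only [Function.comp, lift12, lift23, rmap, Prod.mk.injEq] at h
  exact h.1

theorem braid_snd (x y z : X) :
    S.σ (S.γ (S.σ y z) x) (S.γ z y) = S.γ (S.σ (S.γ y x) z) (S.σ x y) := by
  have h := congrFun S.braid (x, y, z)
  simp only [Function.comp, lift12, lift23, rmap, Prod.mk.injEq] at h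
  exact h.2.1

theorem braid_trd (x y z : X) : S.γ (S.γ z y) (S.γ (S.σ y z) x) = S.γ z (S.γ y x) := by
  have h := congrFun S.braid (x, y, z)
  simp only [Function.comp, lift12, lift23, rmap, Prod.mk.injEq] at h
  exact h.2.2

theorem τ_σ (x y : X) : S.τ (S.σ x y) (S.γ y x) = x :=
  congrArg Prod.fst (S.inv_left (x, y))

theorem ρ_γ (x y : X) : S.ρ (S.γ y x) (S.σ x y) = y :=
  congrArg Prod.snd (S.inv_left (x, y))

theorem σ_τ (x y : X) : S.σ (S.τ x y) (S.ρ y x) = x :=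
  congrArg Prod.fst (S.inv_right (x, y))

theorem γ_ρ (x y : X) : S.γ (S.ρ y x) (S.τ x y) = y :=
  congrArg Prod.snd (S.inv_right (x, y))

/-- The solution `flip ∘ r ∘ flip`. -/
def mirror : NDYBE X where
  σ := S.γ
  γ := S.σ
  τ := S.ρ
  ρ := S.τ
  braid := by
    funext p
    obtain ⟨x, y, z⟩ := p
    simp only [Function.comp, lift12, lift23, rmap, Prod.mk.injEq]
    exact ⟨(S.braid_trd z y x).symm, (S.braid_snd z y x).symm, (S.braid_fst z y x).symm⟩
  inv_left p := Prod.ext (S.ρ_γ p.2 p.1) (S.τ_σ p.2 p.1)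
  inv_right p := Prod.ext (S.γ_ρ p.2 p.1) (S.σ_τ p.2 p.1)
  σ_bij := S.γ_bij
  γ_bij := S.σ_bij
  τ_bij := S.ρ_bij
  ρ_bij := S.τ_bij

/-- The solution `r⁻¹`. -/
def inverse : NDYBE X where
  σ := S.τ
  γ := S.ρ
  τ := S.σ
  ρ := S.γ
  braid := by
    have l12 : ∀ p, lift12 (rmap S.τ S.ρ) (lift12 (rmap S.σ S.γ) p) = p := by
      rintro ⟨x, y, z⟩
      simp [lift12, rmap, τ_σ, ρ_γ]
    have l23 : ∀ p, lift23 (rmap S.τ S.ρ) (lift23 (rmap S.σ S.γ) p) = p := by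
      rintro ⟨x, y, z⟩
      simp [lift23, rmap, τ_σ, ρ_γ]
    have r12 : ∀ p, lift12 (rmap S.σ S.γ) (lift12 (rmap S.τ S.ρ) p) = p := by
      rintro ⟨x, y, z⟩
      simp [lift12, rmap, σ_τ, γ_ρ]
    have r23 : ∀ p, lift23 (rmap S.σ S.γ) (lift23 (rmap S.τ S.ρ) p) = p := by
      rintro ⟨x, y, z⟩
      simp [lift23, rmap, σ_τ, γ_ρ]
    have i12 : Function.Injective (lift12 (rmap S.σ S.γ)) := Function.LeftInverse.injective l12
    have i23 : Function.Injective (lift23 (rmap S.σ S.γ)) := Function.LeftInverse.injective l23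
    funext p
    -- Both sides are inverse to the two sides of the braid relation for `r`.
    apply i23
    apply i12
    apply i23
    have h := congrFun S.braid
    simp only [Function.comp] at h ⊢
    rw [r23, r12, r23, h, r12, r23, r12]
  inv_left := S.inv_right
  inv_right := S.inv_left
  σ_bij := S.τ_bij
  γ_bij := S.ρ_bij
  τ_bij := S.σ_bij
  ρ_bij := S.γ_bij

/-- Apply the braid relation to `(t, y, b)`. -/
theorem pair_γ {y b c : X} (h1 : S.σ y b = y) (h2 : S.γ b y = c) : S.γ b = S.γ c := by
  funext s
  obtain ⟨t, rfl⟩ := (S.γ_bij y).2 s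
  have h := S.braid_trd t y b
  rw [h1, h2] at h
  exact h.symm

/-- The witness of a right pair `(b, c)` is determined by `b`. -/
theorem witness_unique {y y' b : X} (h : S.σ y b = y) (h' : S.σ y' b = y') : y = y' := by
  have key : ∀ y, S.σ y b = y → ∃ e, S.γ b e = b ∧ S.σ e b = y := by
    intro y h
    -- The inverse solution has `ρ_b = ρ_c` with `c = γ_b y`, so `r⁻¹ (y, b) = (e, b)`.
    have hτ : S.τ y (S.γ b y) = y := by simpa [h] using S.τ_σ y b
    have hρ : S.ρ (S.γ b y) y = b := by simpa [h] using S.ρ_γ y b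
    have e1 : S.ρ (S.γ b y) = S.ρ b := S.inverse.pair_γ hτ hρ
    rw [e1] at hρ
    have g1 := S.γ_ρ y b
    have g2 := S.σ_τ y b
    rw [hρ] at g1 g2
    exact ⟨S.τ y b, g1, g2⟩
  obtain ⟨e, h1, h2⟩ := key y h
  obtain ⟨e', h1', h2'⟩ := key y' h'
  have : e = e' := (S.γ_bij b).1 (h1.trans h1'.symm)
  rw [← h2, ← h2', this]

/-- Right pairs can be pulled back along any `σ_v`. -/
theorem pair_pullback {y b c v β κ : X} (h1 : S.σ y b = y) (h2 : S.γ b y = c)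
    (hβ : S.σ v β = b) (hκ : S.σ v κ = c) : ∃ w, S.σ w β = w ∧ S.γ β w = κ := by
  -- The braid relation is applied to `(t, w, β)` with `(t, w) = r⁻¹ (y, v)`.
  obtain ⟨t, w, ht, hw⟩ : ∃ t w, S.σ t w = y ∧ S.γ w t = v :=
    ⟨S.τ y v, S.ρ v y, S.σ_τ y v, S.γ_ρ y v⟩
  have k1 : S.σ w β = w := by
    apply (S.σ_bij t).1
    rw [S.braid_fst, ht, hw, hβ, h1]
  refine ⟨w, k1, (S.σ_bij v).1 ?_⟩
  have h := S.braid_snd t w β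
  rw [k1, hw, ht, hβ, h2] at h
  rw [h, hκ]

/-- If `r (y, b) = (y, c)` then `r (b, t) = (c, t)` for some `t`. -/
theorem pair_swap {y b c : X} (h1 : S.σ y b = y) (h2 : S.γ b y = c) :
    ∃ t, S.σ b t = c ∧ S.γ t b = t := by
  obtain ⟨t, ht⟩ := (S.σ_bij b).2 c
  obtain ⟨t', ht'⟩ := (S.σ_bij b).2 b
  obtain ⟨w, hw1, hw2⟩ := S.pair_pullback h1 h2 ht' ht
  have hwb : w = b := S.witness_unique hw1 ht'
  have hγ := S.pair_γ hw1 hw2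
  refine ⟨t, ht, ?_⟩
  rw [← hγ, ← hwb, hw2]

end NDYBE

/-- for a non-degenerate set-theoretical YBE solution `(X, r)`,
define `𝔩(a) = σ_a(x_a)` where `x_a` is the unique element with `γ_{x_a}(a) = x_a`,
and `𝔯(a) = ρ_a(y_a)` where `y_a` is the unique element with `τ_{y_a}(a) = y_a`.
Then `𝔯 ∘ 𝔩 = id` and `𝔩 ∘ 𝔯 = id`; in particular `𝔩` is a bijection of `X`. -/
theorem NDYBE.l_r_inverse {X : Type*} (S : NDYBE X)
    (fl fr xa ya : X → X)
    (hxa : ∀ a : X, S.γ (xa a) a = xa a)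
    (hfl : ∀ a : X, fl a = S.σ a (xa a))
    (hya : ∀ a : X, S.τ (ya a) a = ya a)
    (hfr : ∀ a : X, fr a = S.ρ a (ya a)) :
    fr ∘ fl = id ∧ fl ∘ fr = id ∧ Function.Bijective fl := by
  have hlr : ∀ a, fl (fr a) = a := by
    intro a
    have h1 : S.σ (ya a) (fr a) = ya a := by
      have h := S.σ_τ (ya a) a
      rwa [hya, ← hfr] at h
    have h2 : S.γ (fr a) (ya a) = a := by
      have h := S.γ_ρ (ya a) a
      rwa [hya, ← hfr] at h
    obtain ⟨t, ht, ht'⟩ := S.pair_swap h1 h2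
    have hx : xa (fr a) = t := S.mirror.witness_unique (hxa (fr a)) ht'
    rw [hfl, hx, ht]
  have hinj : Function.Injective fl := by
    intro a a' h
    have hσ : ∀ a, S.σ a = S.σ (fl a) := fun a =>
      S.mirror.pair_γ (y := xa a) (hxa a) (hfl a).symm
    have hx : xa a = xa a' := by
      apply (S.σ_bij (fl a)).1
      rw [← hσ a, ← hfl, hσ a, h, ← hσ a', ← hfl]
    apply (S.γ_bij (xa a)).1
    rw [hxa, hx, hxa]
  refine ⟨funext fun a => hinj (hlr (fl a)), funext hlr, hinj, fun a => ⟨fr a, hlr a⟩⟩
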